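/- arXiv:2107.13698 — 2 statements merged into one kernel-verified Lean document; each statement's English description precedes it below -/
import Mathlib

section
/- Let (𝒜, ℬ, 𝒞) be a recollement of abelian categories. If i^* is exact, then for every object X of ℬ the counit ε_X : j_! j^* X → X of the adjunction (j_!, j^*) is a monomorphism, so that 0 → j_! j^* X → X → i_* i^* X → 0 is a short exact sequence in ℬ, the second map being the unit of (i^*, i_*) at X. -/
open CategoryTheory CategoryTheory.Limits

/-- A recollement of abelian categories. -/
structure AbelianRecollement (𝒜 : Type*) (ℬ : Type*) (𝒞 : Type*)
    [Category 𝒜] [Category ℬ] [Category 𝒞]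
    [Abelian 𝒜] [Abelian ℬ] [Abelian 𝒞] where
  /-- i^* : ℬ ⥤ 𝒜 -/
  iStar : ℬ ⥤ 𝒜
  /-- i_* : 𝒜 ⥤ ℬ -/
  iLow : 𝒜 ⥤ ℬ
  /-- i^! : ℬ ⥤ 𝒜 -/
  iShriek : ℬ ⥤ 𝒜
  /-- j_! : 𝒞 ⥤ ℬ -/
  jShriek : 𝒞 ⥤ ℬ
  /-- j^* : ℬ ⥤ 𝒞 -/
  jStar : ℬ ⥤ 𝒞
  /-- j_* : 𝒞 ⥤ ℬ -/
  jLow : 𝒞 ⥤ ℬ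
  iStar_additive : iStar.Additive
  iLow_additive : iLow.Additive
  iShriek_additive : iShriek.Additive
  jShriek_additive : jShriek.Additive
  jStar_additive : jStar.Additive
  jLow_additive : jLow.Additive
  /-- (i^*, i_*) is an adjoint pair -/
  adj₁ : iStar ⊣ iLow
  /-- (i_*, i^!) is an adjoint pair -/
  adj₂ : iLow ⊣ iShriek
  /-- (j_!, j^*) is an adjoint pair -/
  adj₃ : jShriek ⊣ jStar
  /-- (j^*, j_*) is an adjoint pair -/
  adj₄ : jStar ⊣ jLow
  iLow_full : iLow.Full
  iLow_faithful : iLow.Faithful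
  jShriek_full : jShriek.Full
  jShriek_faithful : jShriek.Faithful
  jLow_full : jLow.Full
  jLow_faithful : jLow.Faithful
  /-- j^* ∘ i_* = 0 -/
  jStar_iLow_zero : ∀ A : 𝒜, IsZero (jStar.obj (iLow.obj A))
  /-- i_* is exact -/
  iLow_preservesFiniteLimits : PreservesFiniteLimits iLow
  iLow_preservesFiniteColimits : PreservesFiniteColimits iLow
  /-- j^* is exact -/
  jStar_preservesFiniteLimits : PreservesFiniteLimits jStar
  jStar_preservesFiniteColimits : PreservesFiniteColimits jStar
  /-- the composite i_* i^! X ⟶ X ⟶ j_* j^* X vanishes -/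
  comp_zero₁ : ∀ X : ℬ, adj₂.counit.app X ≫ adj₄.unit.app X = 0
  /-- the sequence 0 ⟶ i_* i^! X ⟶ X ⟶ j_* j^* X is exact: the counit is a kernel of the
  unit -/
  exact₁ : ∀ X : ℬ, Nonempty (IsLimit (KernelFork.ofι (adj₂.counit.app X) (comp_zero₁ X)))
  /-- the composite j_! j^* X ⟶ X ⟶ i_* i^* X vanishes -/
  comp_zero₂ : ∀ X : ℬ, adj₃.counit.app X ≫ adj₁.unit.app X = 0
  /-- the sequence j_! j^* X ⟶ X ⟶ i_* i^* X ⟶ 0 is exact: the unit is a cokernel of the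
  counit -/
  exact₂ : ∀ X : ℬ, Nonempty (IsColimit (CokernelCofork.ofπ (adj₁.unit.app X) (comp_zero₂ X)))

/-!
A morphism is a monomorphism as soon as its kernel vanishes, so let `K` be the kernel of the
counit `ε_X`. As `j^*` turns `ε_X` into an isomorphism, `j^* K = 0`. On an object `j_! Z` the
counit is a split epimorphism, so the vanishing composite `j_! j^* ⟶ id ⟶ i_* i^*` makes the unit
zero there, whence `i^* j_! = 0`; since `i^*` preserves monomorphisms, `i^* K ⊆ i^* j_! j^* X`
vanishes too. Exactness of `j_! j^* K ⟶ K ⟶ i_* i^* K ⟶ 0` then forces `K = 0`.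
-/

theorem isZero_obj_of_unit_app_eq_zero {C D : Type*} [Category C] [Category D]
    [HasZeroMorphisms C] [HasZeroMorphisms D] {F : C ⥤ D} {G : D ⥤ C} (adj : F ⊣ G) {X : C}
    (h : adj.unit.app X = 0) : IsZero (F.obj X) := by
  have : F.PreservesZeroMorphisms := have := adj.isLeftAdjoint; inferInstance
  rw [IsZero.iff_id_eq_zero, ← adj.left_triangle_components X, h, F.map_zero, zero_comp]

theorem isZero_obj_kernel_of_mono_map {C D : Type*} [Category C] [Category D]
    [HasZeroMorphisms C] [HasZeroMorphisms D] (F : C ⥤ D) [F.PreservesZeroMorphisms]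
    [F.PreservesMonomorphisms] {X Y : C} (f : X ⟶ Y) [HasKernel f] [Mono (F.map f)] :
    IsZero (F.obj (kernel f)) := by
  have map_ι : F.map (kernel.ι f) = 0 := by
    rw [← cancel_mono (F.map f), ← F.map_comp, kernel.condition, F.map_zero, zero_comp]
  exact IsZero.of_mono_eq_zero _ map_ι

section CounitCompUnit

variable {𝒜 ℬ 𝒞 : Type*} [Category 𝒜] [Category ℬ] [Category 𝒞]
  [HasZeroMorphisms 𝒜] {iStar : ℬ ⥤ 𝒜} {iLow : 𝒜 ⥤ ℬ}
  {jShriek : 𝒞 ⥤ ℬ} {jStar : ℬ ⥤ 𝒞}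

theorem isZero_obj_leftAdjoint_obj_of_counit_comp_unit [HasZeroMorphisms ℬ]
    (adj₁ : iStar ⊣ iLow) (adj₃ : jShriek ⊣ jStar) (Z : 𝒞)
    (w : adj₃.counit.app (jShriek.obj Z) ≫ adj₁.unit.app (jShriek.obj Z) = 0) :
    IsZero (iStar.obj (jShriek.obj Z)) := by
  have : IsSplitEpi (adj₃.counit.app (jShriek.obj Z)) :=
    .mk' ⟨_, adj₃.left_triangle_components Z⟩
  have unit_eq_zero : adj₁.unit.app (jShriek.obj Z) = 0 := by
    rw [← cancel_epi (adj₃.counit.app (jShriek.obj Z)), w, comp_zero]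
  exact isZero_obj_of_unit_app_eq_zero adj₁ unit_eq_zero

variable [HasZeroMorphisms 𝒞]

theorem isZero_of_isZero_obj_of_isColimit_unit [HasZeroMorphisms ℬ]
    (adj₁ : iStar ⊣ iLow) (adj₃ : jShriek ⊣ jStar) {X : ℬ}
    (w : adj₃.counit.app X ≫ adj₁.unit.app X = 0)
    (hc : IsColimit (CokernelCofork.ofπ (adj₁.unit.app X) w))
    (hi : IsZero (iStar.obj X)) (hj : IsZero (jStar.obj X)) : IsZero X := by
  have : iLow.PreservesZeroMorphisms := have := adj₁.isRightAdjoint; inferInstance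
  have : jShriek.PreservesZeroMorphisms := have := adj₃.isLeftAdjoint; inferInstance
  have counit_eq_zero : adj₃.counit.app X = 0 := (jShriek.map_isZero hj).eq_zero_of_src _
  have : IsIso (adj₁.unit.app X) := CokernelCofork.IsColimit.isIso_π _ hc counit_eq_zero
  exact (iLow.map_isZero hi).of_iso (asIso (adj₁.unit.app X))

theorem mono_counit_app_of_isColimit_unit [Preadditive ℬ] [HasKernels ℬ]
    (adj₁ : iStar ⊣ iLow) (adj₃ : jShriek ⊣ jStar) [jShriek.Full] [jShriek.Faithful]
    [iStar.PreservesMonomorphisms] (w : ∀ X, adj₃.counit.app X ≫ adj₁.unit.app X = 0)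
    (hc : ∀ X, Nonempty (IsColimit (CokernelCofork.ofπ (adj₁.unit.app X) (w X)))) (X : ℬ) :
    Mono (adj₃.counit.app X) := by
  have : jStar.PreservesZeroMorphisms := have := adj₃.isRightAdjoint; inferInstance
  have : jStar.PreservesMonomorphisms := jStar.preservesMonomorphisms_of_adjunction adj₃
  let K := kernel (adj₃.counit.app X)
  have jStar_K : IsZero (jStar.obj K) := isZero_obj_kernel_of_mono_map jStar _
  have iStar_K : IsZero (iStar.obj K) :=
    IsZero.of_mono (iStar.map (kernel.ι (adj₃.counit.app X)))
      (isZero_obj_leftAdjoint_obj_of_counit_comp_unit adj₁ adj₃ _ (w _))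
  have isZero_K : IsZero K :=
    isZero_of_isZero_obj_of_isColimit_unit adj₁ adj₃ (w K) (hc K).some iStar_K jStar_K
  exact Preadditive.mono_of_isZero_kernel _ isZero_K

theorem stmt10_general [Abelian ℬ] (adj₁ : iStar ⊣ iLow) (adj₃ : jShriek ⊣ jStar)
    [jShriek.Full] [jShriek.Faithful] [iStar.PreservesMonomorphisms]
    (w : ∀ X, adj₃.counit.app X ≫ adj₁.unit.app X = 0)
    (hc : ∀ X, Nonempty (IsColimit (CokernelCofork.ofπ (adj₁.unit.app X) (w X)))) (X : ℬ) :
    (ShortComplex.mk (adj₃.counit.app X) (adj₁.unit.app X) (w X)).ShortExact :=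
  have ⟨exact, epi_unit⟩ := (ShortComplex.exact_and_epi_g_iff_g_is_cokernel _).mpr (hc X)
  .mk' exact (mono_counit_app_of_isColimit_unit adj₁ adj₃ w hc X) epi_unit

end CounitCompUnit

attribute [instance] AbelianRecollement.jShriek_full AbelianRecollement.jShriek_faithful

/-- In a recollement of abelian categories, if `i^*` is exact then for every `X : ℬ` the
counit `ε_X : j_! j^* X ⟶ X` is a monomorphism, so that
`0 ⟶ j_! j^* X ⟶ X ⟶ i_* i^* X ⟶ 0` is a short exact sequence. -/
theorem stmt10 {𝒜 ℬ 𝒞 : Type*} [Category 𝒜] [Category ℬ] [Category 𝒞]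
    [Abelian 𝒜] [Abelian ℬ] [Abelian 𝒞]
    (R : AbelianRecollement 𝒜 ℬ 𝒞)
    (h₁ : PreservesFiniteLimits R.iStar) (h₂ : PreservesFiniteColimits R.iStar)
    (X : ℬ) :
    Mono (R.adj₃.counit.app X) ∧
    (ShortComplex.mk (R.adj₃.counit.app X) (R.adj₁.unit.app X)
      (R.comp_zero₂ X)).ShortExact := by
  have shortExact := stmt10_general R.adj₁ R.adj₃ R.comp_zero₂ R.exact₂ X
  exact ⟨shortExact.mono_f, shortExact⟩
end

section
/- Let (𝒜, ℬ, 𝒞) be a recollement of abelian categories and suppose 𝒞 has enough injective objects. Let 𝒴 be the full subcategory of ℬ consisting of the objects B such that Hom_ℬ(i_*(A), B) = 0 for every object A of 𝒜 and every short exact sequence 0 → B → E → i_*(A) → 0 in ℬ splits. Then the restriction of j^* to 𝒴 is fully faithful and essentially surjective, i.e., j^* induces an equivalence of categories 𝒴 ≃ 𝒞. -/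
open CategoryTheory CategoryTheory.Limits

/-!
Since `j^*` is an exact functor with fully faithful right adjoint `j_*`, it exhibits `𝒞` as the
quotient of `ℬ` by the Serre class `ker j^*`, which is the essential image of `i_*`. Gabriel's
description of the closed objects then applies: a morphism with kernel and cokernel in `ker j^*`
is inverted by `j^*`, so every morphism into an object `j_* C` extends uniquely along it;
conversely, the unit `B ⟶ j_* j^* B` has kernel and cokernel in `ker j^*`, so it is a split
monomorphism as soon as `B` is right perpendicular to `ker j^*`, and a unit of a reflective
subcategory which is a split monomorphism is an isomorphism. Hence `𝒴` is the essential image of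
`j_*`, on which `j^*` is a quasi-inverse of `j_*`.
-/

section Perpendicular

variable {𝒟 : Type*} [Category 𝒟] [HasZeroMorphisms 𝒟]

/-- The right perpendicular category of a class `S` of objects: the objects `B` with
`Hom(X, B) = 0` and `Ext¹(X, B) = 0` for all `X` in `S`. The vanishing of `Ext¹` is expressed by
the splitting of short exact sequences, which does not require `Ext` groups to be small. -/
def rightPerpendicular (S : ObjectProperty 𝒟) : ObjectProperty 𝒟 := fun B ↦
  S.rightOrthogonal B ∧
    ∀ ⦃X E : 𝒟⦄ (f : B ⟶ E) (g : E ⟶ X) (w : f ≫ g = 0), S X →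
      (ShortComplex.mk f g w).ShortExact → IsSplitMono f

theorem rightPerpendicular_essImage_iff {𝒜 : Type*} [Category 𝒜] (F : 𝒜 ⥤ 𝒟) (B : 𝒟) :
    rightPerpendicular F.essImage B ↔
      (∀ (A : 𝒜) (f : F.obj A ⟶ B), f = 0) ∧
        ∀ (A : 𝒜) (E : 𝒟) (f : B ⟶ E) (g : E ⟶ F.obj A) (w : f ≫ g = 0),
          (ShortComplex.mk f g w).ShortExact → ∃ r : E ⟶ B, f ≫ r = 𝟙 B := by
  constructor
  · rintro ⟨hom_eq_zero, split⟩
    refine ⟨fun A f ↦ hom_eq_zero f (F.obj_mem_essImage A), fun A E f g w hT ↦ ?_⟩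
    have := split f g w (F.obj_mem_essImage A) hT
    exact ⟨retraction f, IsSplitMono.id f⟩
  · rintro ⟨hom_eq_zero, split⟩
    refine ⟨fun X f ⟨A, ⟨e⟩⟩ ↦ ?_, fun X E f g w ⟨A, ⟨e⟩⟩ hT ↦ ?_⟩
    · rw [← cancel_epi e.hom, hom_eq_zero A (e.hom ≫ f), comp_zero]
    · have w' : f ≫ g ≫ e.inv = 0 := by rw [reassoc_of% w, zero_comp]
      have hT' : (ShortComplex.mk f (g ≫ e.inv) w').ShortExact :=
        ShortComplex.shortExact_of_iso (S₁ := .mk f g w)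
          (ShortComplex.isoMk (Iso.refl _) (Iso.refl _) e.symm) hT
      obtain ⟨r, hr⟩ := split A E f (g ≫ e.inv) w' hT'
      exact IsSplitMono.mk' ⟨r, hr⟩

end Perpendicular

section SerreClass

variable {𝒟 : Type*} [Category 𝒟] [Abelian 𝒟]

theorem isoModSerre_of_shortExact (S : ObjectProperty 𝒟) [S.IsSerreClass] {T : ShortComplex 𝒟}
    (hT : T.ShortExact) (h₃ : S T.X₃) : S.isoModSerre T.f := by
  have := hT.mono_f
  have cokernelIso : T.X₃ ≅ cokernel T.f :=
    hT.gIsCokernel.coconePointUniqueUpToIso (colimit.isColimit _)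
  exact S.isoModSerre_of_mono T.f (S.prop_of_iso cokernelIso h₃)

theorem rightPerpendicular.isSplitMono_of_isoModSerre {S : ObjectProperty 𝒟} [S.IsSerreClass]
    {B E : 𝒟} (hB : rightPerpendicular S B) (f : B ⟶ E) (hf : S.isoModSerre f) : IsSplitMono f := by
  have mono_f : Mono f :=
    Preadditive.mono_of_kernel_zero (hB.1 (kernel.ι f) hf.1)
  exact hB.2 f (cokernel.π f) (cokernel.condition f) hf.2
    { exact := ShortComplex.exact_cokernel f
      mono_f := mono_f
      epi_g := inferInstance }

theorem rightPerpendicular_of_isLocal {S : ObjectProperty 𝒟} [S.IsSerreClass] {B : 𝒟}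
    (hB : S.isoModSerre.isLocal B) : rightPerpendicular S B := by
  refine ⟨fun X f hX ↦ ?_, fun X E f g w hX hT ↦ ?_⟩
  · have zero_mem : S.isoModSerre (0 : X ⟶ X) := by simpa using hX
    exact (hB _ zero_mem).1 (by simp)
  · obtain ⟨r, hr⟩ := (hB f (isoModSerre_of_shortExact S hT hX)).2 (𝟙 B)
    exact IsSplitMono.mk' ⟨r, hr⟩

end SerreClass

section Adjunction

variable {𝒟 𝒞 : Type*} [Category 𝒟] [Category 𝒞] {L : 𝒟 ⥤ 𝒞} {G : 𝒞 ⥤ 𝒟} [G.Full] [G.Faithful]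

theorem isEquivalence_essImage_ι_comp (adj : L ⊣ G) : (G.essImage.ι ⋙ L).IsEquivalence := by
  have : (G.toEssImage ⋙ G.essImage.ι ⋙ L).IsEquivalence :=
    Functor.isEquivalence_of_iso (asIso adj.counit).symm
  exact Functor.isEquivalence_of_comp_left G.toEssImage _

theorem rightPerpendicular_kernel_eq_essImage [Abelian 𝒟] [Abelian 𝒞] [PreservesFiniteLimits L]
    (adj : L ⊣ G) : rightPerpendicular L.kernel = G.essImage := by
  have := adj.leftAdjoint_preservesColimits
  have isoModSerre_eq : L.kernel.isoModSerre = G.essImage.isLocal := by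
    rw [Abelian.isoModSerre_kernel_eq_isLocal_of_rightAdjoint adj,
      ← ObjectProperty.isoClosure_isLocal, Functor.isoClosure_eq_essImage]
  ext B
  constructor
  · intro hB
    let _ : Reflective G := { L := L, adj := adj }
    have unit_mem : L.kernel.isoModSerre (adj.unit.app B) := by
      rw [Abelian.isoModSerre_kernel_eq_inverseImage_isomorphisms]
      exact inferInstanceAs (IsIso (L.map (adj.unit.app B)))
    have : IsSplitMono ((reflectorAdjunction G).unit.app B) :=
      hB.isSplitMono_of_isoModSerre _ unit_mem
    exact mem_essImage_of_unit_isSplitMono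
  · intro hB
    refine rightPerpendicular_of_isLocal fun X Y f hf ↦ ?_
    rw [isoModSerre_eq] at hf
    exact hf B hB

end Adjunction

namespace AbelianRecollement

variable {𝒜 ℬ 𝒞 : Type*} [Category 𝒜] [Category ℬ] [Category 𝒞]
  [Abelian 𝒜] [Abelian ℬ] [Abelian 𝒞] (R : AbelianRecollement 𝒜 ℬ 𝒞)

theorem kernel_jStar_eq_essImage_iLow : R.jStar.kernel = R.iLow.essImage := by
  have := R.jLow_additive
  ext X
  constructor
  · intro hX
    have unit_eq_zero : R.adj₄.unit.app X = 0 := (R.jLow.map_isZero hX).eq_of_tgt _ _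
    obtain ⟨isKernel⟩ := R.exact₁ X
    have : IsIso (R.adj₂.counit.app X) := KernelFork.IsLimit.isIso_ι _ isKernel unit_eq_zero
    exact ⟨R.iShriek.obj X, ⟨asIso (R.adj₂.counit.app X)⟩⟩
  · rintro ⟨A, ⟨e⟩⟩
    exact (R.jStar_iLow_zero A).of_iso (R.jStar.mapIso e.symm)

theorem rightPerpendicular_essImage_iLow_eq :
    rightPerpendicular R.iLow.essImage = R.jLow.essImage := by
  have := R.jLow_full
  have := R.jLow_faithful
  have := R.jStar_preservesFiniteLimits
  rw [← R.kernel_jStar_eq_essImage_iLow, rightPerpendicular_kernel_eq_essImage R.adj₄]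

end AbelianRecollement

theorem stmt16_general {𝒜 ℬ 𝒞 : Type*} [Category 𝒜] [Category ℬ] [Category 𝒞]
    [Abelian 𝒜] [Abelian ℬ] [Abelian 𝒞]
    (R : AbelianRecollement 𝒜 ℬ 𝒞)
    (P : ℬ → Prop)
    (hP : ∀ B : ℬ, P B ↔
      ((∀ (A : 𝒜) (f : R.iLow.obj A ⟶ B), f = 0) ∧
        (∀ (A : 𝒜) (E : ℬ) (f : B ⟶ E) (g : E ⟶ R.iLow.obj A) (w : f ≫ g = 0),
          (ShortComplex.mk f g w).ShortExact → ∃ r : E ⟶ B, f ≫ r = 𝟙 B))) :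
    (ObjectProperty.ι P ⋙ R.jStar).IsEquivalence := by
  have := R.jLow_full
  have := R.jLow_faithful
  obtain rfl : P = R.jLow.essImage := by
    rw [← R.rightPerpendicular_essImage_iLow_eq]
    ext B
    rw [hP, rightPerpendicular_essImage_iff]
  exact isEquivalence_essImage_ι_comp R.adj₄

/-- Let `(𝒜, ℬ, 𝒞)` be a recollement of abelian categories where `𝒞` has enough injectives,
and let `𝒴 ⊆ ℬ` be the full subcategory of objects `B` with `Hom_ℬ(i_* A, B) = 0` for all
`A : 𝒜` and such that every short exact sequence `0 ⟶ B ⟶ E ⟶ i_* A ⟶ 0` splits.  Then the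
restriction of `j^*` to `𝒴` is fully faithful and essentially surjective, i.e. induces an
equivalence `𝒴 ≃ 𝒞`. -/
theorem stmt16 {𝒜 ℬ 𝒞 : Type*} [Category 𝒜] [Category ℬ] [Category 𝒞]
    [Abelian 𝒜] [Abelian ℬ] [Abelian 𝒞]
    (R : AbelianRecollement 𝒜 ℬ 𝒞) [EnoughInjectives 𝒞]
    (P : ℬ → Prop)
    (hP : ∀ B : ℬ, P B ↔
      ((∀ (A : 𝒜) (f : R.iLow.obj A ⟶ B), f = 0) ∧
        (∀ (A : 𝒜) (E : ℬ) (f : B ⟶ E) (g : E ⟶ R.iLow.obj A) (w : f ≫ g = 0),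
          (ShortComplex.mk f g w).ShortExact → ∃ r : E ⟶ B, f ≫ r = 𝟙 B))) :
    (ObjectProperty.ι P ⋙ R.jStar).Full ∧
    (ObjectProperty.ι P ⋙ R.jStar).Faithful ∧
    (ObjectProperty.ι P ⋙ R.jStar).EssSurj := by
  have := stmt16_general R P hP
  exact ⟨inferInstance, inferInstance, inferInstance⟩
end
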